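/- Lipschitz continuity of the penalty-featured cost V on the whole feasible set: Fix α ≥ 0, λ : I → [0,∞), c : J × I → (0,∞), ρ₀ ∈ (0,1), and let F_α be the tangent-line extension of u_α at ρ₀ (F_α(x) = u_α(x) for x ≤ ρ₀ and F_α(x) = u_α(ρ₀) + (1−ρ₀)^{−α}·(x − ρ₀) for x > ρ₀). Define V(π) = Σ_{j∈J} F_α(ρ_j(π)). Then for all π, π' ∈ Ω' (with no load constraint), |V(π) − V(π')| ≤ (1−ρ₀)^{−α} · ( max_{j∈J, i∈I} λ(i)/c(j,i) ) · ‖π − π'‖₁. -/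

import Mathlib

open Finset Real

/-!
On `(-∞, 1)` the utility `u_α` has derivative `(1 - x) ^ (-α)`, which is positive and, as `α ≥ 0`,
nondecreasing. So `u_α` is `K`-Lipschitz on `(-∞, ρ₀]` with `K = (1 - ρ₀) ^ (-α)`, and continuing it
by a line of that very slope costs nothing: the extension is `K`-Lipschitz on all of `ℝ`. The cost
is a sum of this extension over the loads, and the loads are linear in the policy.
-/

/-- The `α`-fair utility `u_α` of an access point with load `x < 1`; for `x ≥ 1` its value is the
one given by the conventions for `Real.log` and `Real.rpow`. -/
noncomputable def alphaFairUtility (α x : ℝ) : ℝ :=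
  if α = 1 then -Real.log (1 - x) else (1 - x) ^ (1 - α) / (α - 1)

/-- The function `f` up to `r`, continued beyond `r` by the line of slope `s` through `(r, f r)`.
The slope is a free parameter, so `f` need not be differentiable; for the tangent-line extension
take `s = f' r`. -/
noncomputable def extendByLine (f : ℝ → ℝ) (r s x : ℝ) : ℝ :=
  if x ≤ r then f x else f r + s * (x - r)

/-- The load of access point `j` under the policy `p`, where `w j i` is the load that location `i`
would put on `j` if all its traffic went there (`λ(i) / c(j, i)` in the paper). -/
def load {I J : Type*} [Fintype I] (w : J → I → ℝ) (p : I → J → ℝ) (j : J) : ℝ :=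
  ∑ i, w j i * p i j

/-- The penalty-featured cost `V` with load threshold `r`: the sum over the access points of the
tangent-line extension of `u_α` at `r`, whose slope there is `u_α'(r) = (1 - r) ^ (-α)`. -/
noncomputable def penalizedCost {I J : Type*} [Fintype I] [Fintype J]
    (α r : ℝ) (w : J → I → ℝ) (p : I → J → ℝ) : ℝ :=
  ∑ j, extendByLine (alphaFairUtility α) r ((1 - r) ^ (-α)) (load w p j)

section Lipschitz

open scoped NNReal

theorem lipschitzWith_of_lipschitzOnWith_Iic_of_lipschitzOnWith_Ici {E : Type*}
    [PseudoMetricSpace E] {f : ℝ → E} {K : ℝ≥0} {a : ℝ} (hle : LipschitzOnWith K f (Set.Iic a))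
    (hge : LipschitzOnWith K f (Set.Ici a)) : LipschitzWith K f := by
  refine LipschitzWith.of_dist_le_mul fun x y => ?_
  wlog hxy : x ≤ y generalizing x y
  · simpa only [dist_comm] using this y x (le_of_not_ge hxy)
  rcases le_total y a with hya | hay
  · exact hle.dist_le_mul x (hxy.trans hya) y hya
  rcases le_total a x with hax | hxa
  · exact hge.dist_le_mul x hax y hay
  calc dist (f x) (f y) ≤ dist (f x) (f a) + dist (f a) (f y) := dist_triangle ..
    _ ≤ K * dist x a + K * dist a y :=
        add_le_add (hle.dist_le_mul x hxa a Set.self_mem_Iic)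
          (hge.dist_le_mul a Set.self_mem_Ici y hay)
    _ = K * dist x y := by
        rw [← mul_add, dist_add_dist_of_mem_segment (segment_eq_Icc hxy ▸ ⟨hxa, hay⟩)]

theorem lipschitzWith_extendByLine {f : ℝ → ℝ} {r s : ℝ} {K : ℝ≥0}
    (hf : LipschitzOnWith K f (Set.Iic r)) (hs : ‖s‖₊ ≤ K) :
    LipschitzWith K (extendByLine f r s) := by
  have hleft : Set.EqOn (extendByLine f r s) f (Set.Iic r) := fun x hx => if_pos hx
  have hright : Set.EqOn (extendByLine f r s) (fun x => f r + s * (x - r)) (Set.Ici r) := by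
    intro x (hx : r ≤ x)
    rcases hx.eq_or_lt with rfl | hrx
    · simp [extendByLine]
    · exact if_neg hrx.not_ge
  refine lipschitzWith_of_lipschitzOnWith_Iic_of_lipschitzOnWith_Ici (a := r)
    (fun x hx y hy => ?_) (LipschitzOnWith.of_dist_le_mul fun x hx y hy => ?_)
  · rw [hleft hx, hleft hy]
    exact hf hx hy
  · rw [hright hx, hright hy, dist_add_left, Real.dist_eq, ← mul_sub, sub_sub_sub_cancel_right,
      abs_mul, Real.dist_eq]
    exact mul_le_mul_of_nonneg_right hs (abs_nonneg _)

theorem dist_sum_comp_le {ι E F : Type*} [PseudoMetricSpace E] [SeminormedAddCommGroup F]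
    {f : E → F} {K : ℝ≥0} (hf : LipschitzWith K f) (s : Finset ι) (x y : ι → E) :
    dist (∑ j ∈ s, f (x j)) (∑ j ∈ s, f (y j)) ≤ K * ∑ j ∈ s, dist (x j) (y j) := by
  rw [mul_sum]
  exact dist_sum_sum_le_of_le s fun j _ => hf.dist_le_mul (x j) (y j)

end Lipschitz

section Utility

variable {α x r : ℝ}

theorem hasDerivAt_alphaFairUtility (α : ℝ) (hx : x < 1) :
    HasDerivAt (alphaFairUtility α) ((1 - x) ^ (-α)) x := by
  have hpos : 0 < 1 - x := sub_pos.mpr hx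
  have hsub : HasDerivAt (fun y : ℝ => 1 - y) (-1) x := (hasDerivAt_id x).const_sub 1
  unfold alphaFairUtility
  split_ifs with hα
  · refine (hsub.log hpos.ne').neg.congr_deriv ?_
    rw [hα, Real.rpow_neg_one, neg_div, neg_neg, one_div]
  · have hne : α - 1 ≠ 0 := sub_ne_zero.mpr hα
    refine ((hsub.rpow_const (Or.inl hpos.ne')).div_const (α - 1)).congr_deriv ?_
    rw [show 1 - α - 1 = -α by ring]
    field_simp
    ring

theorem lipschitzOnWith_alphaFairUtility (hα : 0 ≤ α) (hr : r < 1) :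
    LipschitzOnWith ((1 - r) ^ (-α)).toNNReal (alphaFairUtility α) (Set.Iic r) := by
  refine (convex_Iic r).lipschitzOnWith_of_nnnorm_hasDerivWithin_le
    (fun x hx => (hasDerivAt_alphaFairUtility α (hx.trans_lt hr)).hasDerivWithinAt)
    fun x (hx : x ≤ r) => ?_
  rw [← Real.toNNReal_eq_nnnorm_of_nonneg (Real.rpow_nonneg (by linarith) _)]
  exact Real.toNNReal_mono
    (Real.rpow_le_rpow_of_nonpos (sub_pos.mpr hr) (by linarith) (neg_nonpos.mpr hα))

theorem lipschitzWith_extendByLine_alphaFairUtility (hα : 0 ≤ α) (hr : r < 1) :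
    LipschitzWith ((1 - r) ^ (-α)).toNNReal
      (extendByLine (alphaFairUtility α) r ((1 - r) ^ (-α))) :=
  lipschitzWith_extendByLine (lipschitzOnWith_alphaFairUtility hα hr)
    (Real.toNNReal_eq_nnnorm_of_nonneg (Real.rpow_nonneg (sub_pos.mpr hr).le _)).ge

end Utility

section Cost

variable {I J : Type*} [Fintype I] {w : J → I → ℝ} {M : ℝ}

theorem dist_load_le {j : J} (hw : ∀ i, |w j i| ≤ M) (p p' : I → J → ℝ) :
    dist (load w p j) (load w p' j) ≤ M * ∑ i, |p i j - p' i j| := by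
  rw [mul_sum]
  refine dist_sum_sum_le_of_le _ fun i _ => ?_
  rw [Real.dist_eq, ← mul_sub, abs_mul]
  exact mul_le_mul_of_nonneg_right (hw i) (abs_nonneg _)

variable [Fintype J]

theorem sum_dist_load_le (hw : ∀ j i, |w j i| ≤ M) (p p' : I → J → ℝ) :
    ∑ j, dist (load w p j) (load w p' j) ≤ M * ∑ i, ∑ j, |p i j - p' i j| := by
  rw [sum_comm, mul_sum]
  exact sum_le_sum fun j _ => dist_load_le (hw j) p p'

theorem penalized_cost_lipschitz_general {α r : ℝ} (hα : 0 ≤ α) (hr : r < 1)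
    (hw : ∀ j i, |w j i| ≤ M) (p p' : I → J → ℝ) :
    |penalizedCost α r w p - penalizedCost α r w p'| ≤
      (1 - r) ^ (-α) * M * ∑ i, ∑ j, |p i j - p' i j| := by
  have hK : 0 ≤ (1 - r) ^ (-α) := Real.rpow_nonneg (sub_pos.mpr hr).le _
  calc |penalizedCost α r w p - penalizedCost α r w p'|
      ≤ (1 - r) ^ (-α) * ∑ j, dist (load w p j) (load w p' j) := by
        simpa only [penalizedCost, Real.dist_eq, Real.coe_toNNReal _ hK] using
          dist_sum_comp_le (lipschitzWith_extendByLine_alphaFairUtility hα hr) univ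
            (load w p) (load w p')
    _ ≤ (1 - r) ^ (-α) * (M * ∑ i, ∑ j, |p i j - p' i j|) :=
        mul_le_mul_of_nonneg_left (sum_dist_load_le hw p p') hK
    _ = (1 - r) ^ (-α) * M * ∑ i, ∑ j, |p i j - p' i j| := (mul_assoc ..).symm

end Cost

/-- Lipschitz continuity of the penalty-featured cost `V` on the whole feasible set Ω'. -/
theorem penalized_cost_lipschitz
    {I J : Type*} [Fintype I] [Fintype J] [Nonempty I] [Nonempty J]
    (α : ℝ) (hα : 0 ≤ α)
    (lam : I → ℝ) (hlam : ∀ i, 0 ≤ lam i)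
    (c : J → I → ℝ) (hc : ∀ j i, 0 < c j i)
    (ρ₀ : ℝ) (hρ₀ : ρ₀ ∈ Set.Ioo (0 : ℝ) 1)
    -- AP loads
    (ρ : J → (I → J → ℝ) → ℝ)
    (hρ : ρ = fun j p => ∑ i, lam i * p i j / c j i)
    -- the α-fair per-AP utility
    (u : ℝ → ℝ)
    (hu : u = fun x => if α = 1 then -Real.log (1 - x) else (1 - x) ^ (1 - α) / (α - 1))
    -- its tangent-line extension at ρ₀
    (Fα : ℝ → ℝ)
    (hFα : Fα = fun x => if x ≤ ρ₀ then u x else u ρ₀ + (1 - ρ₀) ^ (-α) * (x - ρ₀))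
    -- the penalty-featured cost
    (V : (I → J → ℝ) → ℝ)
    (hV : V = fun p => ∑ j, Fα (ρ j p))
    -- two arbitrary feasible policies, with no load constraint
    (pol pol' : I → J → ℝ)
    (hpol : (∀ i j, 0 ≤ pol i j) ∧ ∀ i, ∑ j, pol i j = 1)
    (hpol' : (∀ i j, 0 ≤ pol' i j) ∧ ∀ i, ∑ j, pol' i j = 1) :
    |V pol - V pol'| ≤
      (1 - ρ₀) ^ (-α) *
        (Finset.univ.sup' Finset.univ_nonempty (fun q : J × I => lam q.2 / c q.1 q.2)) *
        (∑ i, ∑ j, |pol i j - pol' i j|) := by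
  have hw : ∀ j i, |lam i / c j i| ≤ univ.sup' univ_nonempty fun q : J × I => lam q.2 / c q.1 q.2 :=
    fun j i => (abs_of_nonneg (div_nonneg (hlam i) (hc j i).le)).trans_le
      (le_sup' (fun q : J × I => lam q.2 / c q.1 q.2) (mem_univ (j, i)))
  subst hρ hu hFα hV
  simp only [mul_div_right_comm]
  exact penalized_cost_lipschitz_general hα hρ₀.2 hw pol pol'
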